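/- There is a universal constant C > 0 with the following property: for every k_F ≥ 1, every ℓ ∈ ℤ³∖{0}, every g ≥ 0, and every complex matrix K = (K_{r,s})_{r,s∈L_ℓ} satisfying |K_{r,s}| ≤ g·k_F^{-1}·(λ_{ℓ,r}+λ_{ℓ,s})^{-1} for all r,s ∈ L_ℓ, one has for every integer m ≥ 1 and all r,s ∈ L_ℓ the bound |(K^m)_{r,s}| ≤ (C·g)^m · k_F^{-1} · (λ_{ℓ,r}+λ_{ℓ,s})^{-1}. -/

import Mathlib

open scoped BigOperators
open MeasureTheory

noncomputable section

attribute [local instance] Classical.propDecidable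

/-- The momentum lattice `ℤ³`. -/
abbrev Z3 : Type := Fin 3 → ℤ

/-- Squared Euclidean norm `|p|²` of an integer vector, as a real number. -/
def nsq (p : Z3) : ℝ := ∑ i, ((p i : ℝ)) ^ 2

/-- The Fermi ball `B_F = {k ∈ ℤ³ : |k| ≤ k_F}`. -/
def BF (kF : ℝ) : Set Z3 := {k | nsq k ≤ kF ^ 2}

/-- The lens `L_ℓ = B_F^c ∩ (B_F + ℓ)`. -/
def lens (kF : ℝ) (ℓ : Z3) : Set Z3 := {p | p ∉ BF kF ∧ p - ℓ ∈ BF kF}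

/-- The excitation energy `λ_{ℓ,p} = (|p|² − |p−ℓ|²)/2`. -/
def lam (ℓ p : Z3) : ℝ := (nsq p - nsq (p - ℓ)) / 2

/-- The energy gap `e(q) = | |q|² − min_{p ∈ B_F^c} |p|² + 1/2 |`. -/
def efun (kF : ℝ) (q : Z3) : ℝ := |nsq q - sInf (nsq '' (BF kF)ᶜ) + 1 / 2|

/-- Product of two (lens-supported) matrices, realized as functions on `ℤ³ × ℤ³`. -/
def matMulC (A B : Z3 → Z3 → ℂ) : Z3 → Z3 → ℂ := fun r s => ∑' t : Z3, A r t * B t s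

/-- `m`-th power of a matrix realized as a function on `ℤ³ × ℤ³`. -/
def matPowC (K : Z3 → Z3 → ℂ) : ℕ → Z3 → Z3 → ℂ
  | 0 => fun r s => if r = s then 1 else 0
  | n + 1 => matMulC K (matPowC K n)

/-!
Since `(λ_r + λ_t)(λ_t + λ_s) ≥ λ_t (λ_r + λ_s)`, multiplying two kernels of the assumed size
produces a kernel of the same shape, with the extra factor `kF⁻¹ ∑_{t ∈ L_ℓ} λ_t⁻¹`. The theorem
therefore follows by induction on `m` from the lens sum `∑_{t ∈ L_ℓ} λ_t⁻¹ ≤ C kF`, uniform in `ℓ`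
(`sum_lens`).

For `|ℓ| ≥ 4 kF` every `λ` is at least `|ℓ|²/4`, and counting points suffices. For `|ℓ| ≤ 4 kF`, let
`ℓ₂` be the coordinate of `ℓ` of largest modulus.

* Points with `λ < |ℓ|²` (`sum_low`). On a slab orthogonal to `ℓ` of thickness one, `λ ≈ k|ℓ|`, and
  the points of the lens lie in a spherical shell. Projected along the last axis they fill an
  elliptical annulus, and `card_annulus` gives `O(kF + (k+1)|ℓ|)` of them. In the slab `k = 0` one
  uses `λ ≥ 1/2`; the other slabs, at most `|ℓ|` in number, contribute `O(kF/|ℓ| + 1)` each.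

* Points with `λ ≥ |ℓ|²` (`sum_high`). A line parallel to `ℓ` meets the lens at most once in each
  residue class modulo `ℓ`, namely where it leaves the ball, and there `λ` is at least a constant
  times `|ℓ| h`, with `h ≥ |ℓ|/2` half the length of the chord. In suitable coordinates `h²` is a
  concave quadratic in one integer variable.

Both parts rest on `sum_inv_sqrt_quad`: the sum of `q(x)^{-1/2}` over integers where a concave
quadratic `q` is at least `1` is bounded by an absolute constant. Summing along lines first in this
way is what avoids a factor `log kF` when `|ℓ|` is small.
-/

/-! ### One-dimensional counting and summation -/

lemma card_le_of_diff {X : Finset ℤ} {w : ℝ} (hw : 0 ≤ w)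
    (h : ∀ x ∈ X, ∀ y ∈ X, x ≤ y → (y : ℝ) - x ≤ w) : (X.card : ℝ) ≤ w + 1 := by
  rcases X.eq_empty_or_nonempty with rfl | hne
  · simp; linarith
  · set a := X.min' hne
    have hsub : X ⊆ Finset.Icc a (a + ⌊w⌋) := by
      intro y hy
      have h1 : a ≤ y := X.min'_le y hy
      have h2 := h a (X.min'_mem hne) y hy h1
      rw [Finset.mem_Icc]
      refine ⟨h1, ?_⟩
      have : y - a ≤ ⌊w⌋ := Int.le_floor.mpr (by push_cast; exact h2)
      linarith
    have h3 := Finset.card_le_card hsub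
    rw [Int.card_Icc] at h3
    have h4 : 0 ≤ ⌊w⌋ := Int.floor_nonneg.mpr hw
    have h5 : (X.card : ℤ) ≤ ⌊w⌋ + 1 := by omega
    have h6 : (X.card : ℝ) ≤ (⌊w⌋ : ℝ) + 1 := by exact_mod_cast h5
    linarith [Int.floor_le w]

lemma card_le_two_sided {X : Finset ℤ} {x0 w : ℝ} (hw : 0 ≤ w)
    (h : ∀ x ∈ X, ∀ y ∈ X, x ≤ y → (x0 ≤ x ∨ y ≤ x0) → (y : ℝ) - x ≤ w) :
    (X.card : ℝ) ≤ 2 * (w + 1) := by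
  have h1 : ((X.filter (fun x : ℤ => x0 ≤ x)).card : ℝ) ≤ w + 1 := by
    refine card_le_of_diff hw fun x hx y hy hxy => ?_
    rw [Finset.mem_filter] at hx hy
    exact h x hx.1 y hy.1 hxy (Or.inl hx.2)
  have h2 : ((X.filter (fun x : ℤ => ¬ x0 ≤ x)).card : ℝ) ≤ w + 1 := by
    refine card_le_of_diff hw fun x hx y hy hxy => ?_
    rw [Finset.mem_filter] at hx hy
    exact h x hx.1 y hy.1 hxy (Or.inr (le_of_not_ge hy.2))
  have h3 := Finset.card_filter_add_card_filter_not (s := X) (fun x : ℤ => x0 ≤ x)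
  have h4 : (X.card : ℝ) = (X.filter (fun x : ℤ => x0 ≤ x)).card
      + (X.filter (fun x : ℤ => ¬ x0 ≤ x)).card := by exact_mod_cast h3.symm
  linarith

/-- Two points on the same side of the vertex satisfy `|u - v|² ≤ |u² - v²|`, so a quadratic stays
in a window of length `W` for at most about `√W` consecutive integers on each side. -/
lemma card_quad_le_sqrt {X : Finset ℤ} {γ x0 α W : ℝ} (hγ : 1 ≤ γ)
    (h : ∀ x ∈ X, α ≤ γ * ((x : ℝ) - x0) ^ 2 ∧ γ * ((x : ℝ) - x0) ^ 2 ≤ α + W) :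
    (X.card : ℝ) ≤ 2 * (√W + 1) := by
  refine card_le_two_sided (x0 := x0) (Real.sqrt_nonneg _) fun x hx y hy hxy hs => ?_
  have hxy' : (x : ℝ) ≤ y := by exact_mod_cast hxy
  apply Real.le_sqrt_of_sq_le
  obtain ⟨hx1, hx2⟩ := h x hx
  obtain ⟨hy1, hy2⟩ := h y hy
  have key : γ * ((y : ℝ) - x) ^ 2 ≤ W := by
    rcases hs with hs | hs
    · have : 0 ≤ γ * (((y : ℝ) - x) * (x - x0)) := by
        apply mul_nonneg (by linarith); apply mul_nonneg <;> linarith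
      nlinarith
    · have : 0 ≤ γ * (((y : ℝ) - x) * (x0 - y)) := by
        apply mul_nonneg (by linarith); apply mul_nonneg <;> linarith
      nlinarith
  nlinarith [sq_nonneg ((y : ℝ) - x)]

/-- Away from its vertex the quadratic has slope at least about `√α`. -/
lemma card_quad_le_div {X : Finset ℤ} {γ x0 α W : ℝ} (hγ : 1 ≤ γ) (hW : 0 ≤ W) (hα : 0 < α)
    (h : ∀ x ∈ X, α ≤ γ * ((x : ℝ) - x0) ^ 2 ∧ γ * ((x : ℝ) - x0) ^ 2 ≤ α + W) :
    (X.card : ℝ) ≤ 2 * (W / √α + 1) := by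
  have hsα : 0 < √α := Real.sqrt_pos.mpr hα
  refine card_le_two_sided (x0 := x0) (by positivity) fun x hx y hy hxy hs => ?_
  have hxy' : (x : ℝ) ≤ y := by exact_mod_cast hxy
  rw [le_div_iff₀ hsα]
  obtain ⟨hx1, hx2⟩ := h x hx
  obtain ⟨hy1, hy2⟩ := h y hy
  have hroot : ∀ u : ℝ, 0 ≤ u → α ≤ γ * u ^ 2 → √α ≤ γ * u := by
    intro u hu h1
    apply Real.sqrt_le_iff.mpr
    refine ⟨by positivity, ?_⟩
    nlinarith [mul_nonneg (mul_nonneg (by linarith : (0:ℝ) ≤ γ) (by linarith : (0:ℝ) ≤ γ - 1))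
      (sq_nonneg u)]
  rcases hs with hs | hs
  · have h1 := hroot (x - x0) (by linarith) hx1
    have h2 := mul_le_mul_of_nonneg_left h1 (by linarith : (0:ℝ) ≤ y - x)
    have h3 : 0 ≤ γ * (((y : ℝ) - x) * (y - x0)) := by
      apply mul_nonneg (by linarith); apply mul_nonneg <;> linarith
    nlinarith
  · have h1 := hroot (x0 - y) (by linarith) (by nlinarith)
    have h2 := mul_le_mul_of_nonneg_left h1 (by linarith : (0:ℝ) ≤ y - x)
    have h3 : 0 ≤ γ * (((y : ℝ) - x) * (x0 - x)) := by
      apply mul_nonneg (by linarith); apply mul_nonneg <;> linarith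
    nlinarith

lemma sum_inv_sqrt_le (n : ℕ) : ∑ i ∈ Finset.range n, 1 / √((i : ℝ) + 1) ≤ 2 * √(n : ℝ) := by
  induction n with
  | zero => simp
  | succ n ih =>
    rw [Finset.sum_range_succ]
    push_cast
    set s := √((n : ℝ) + 1) with hs
    have hs0 : 0 < s := Real.sqrt_pos.mpr (by positivity)
    have hs2 : s ^ 2 = n + 1 := Real.sq_sqrt (by positivity)
    have ht2 : √(n : ℝ) ^ 2 = n := Real.sq_sqrt (by positivity)
    have : 1 / s ≤ 2 * s - 2 * √(n : ℝ) := by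
      rw [div_le_iff₀ hs0]
      nlinarith [sq_nonneg (s - √(n : ℝ))]
    linarith

/-- With `ρ = √(M/γ)`, the integer at distance `u` right of the vertex contributes at most a
constant times `(ρ k)^{-1/2}`, where `k = ⌊ρ - u⌋`; distinct integers have distinct `k`, and only
`k = 0` needs the lower bound `1` on the quadratic. -/
lemma sum_inv_sqrt_quad_right {X : Finset ℤ} {γ x0 M : ℝ} (hγ : 1 / 2 ≤ γ)
    (h : ∀ x ∈ X, x0 ≤ (x : ℝ) ∧ 1 ≤ M - γ * ((x : ℝ) - x0) ^ 2) :
    ∑ x ∈ X, 1 / √(M - γ * ((x : ℝ) - x0) ^ 2) ≤ 4 := by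
  rcases X.eq_empty_or_nonempty with rfl | ⟨x1, hx1⟩
  · simp
  have hγ0 : 0 < γ := by linarith
  have hM : 1 ≤ M := by
    have := (h x1 hx1).2
    nlinarith [mul_nonneg hγ0.le (sq_nonneg ((x1 : ℝ) - x0))]
  set ρ := √(M / γ) with hρ
  have hρ0 : 0 < ρ := Real.sqrt_pos.mpr (by positivity)
  have hρ2 : γ * ρ ^ 2 = M := by
    rw [hρ, Real.sq_sqrt (by positivity)]; field_simp
  have hu : ∀ x ∈ X, (x : ℝ) - x0 < ρ := by
    intro x hx
    have h1 := (h x hx).2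
    by_contra hcon
    push Not at hcon
    nlinarith [mul_le_mul hcon hcon hρ0.le (by linarith)]
  let G : ℕ → ℝ := fun k => if k = 0 then 1 else √2 / √ρ * (1 / √(k : ℝ))
  have hG0 : ∀ k, 0 ≤ G k := by
    intro k; simp only [G]; split_ifs <;> positivity
  have hinj : Set.InjOn (fun x : ℤ => ⌊ρ - ((x : ℝ) - x0)⌋₊) X := by
    intro x hx y hy hxy
    have hx' := hu x hx
    have hy' := hu y hy
    simp only at hxy
    have a1 := Nat.floor_le (by linarith : 0 ≤ ρ - ((x : ℝ) - x0))
    have a2 := Nat.lt_floor_add_one (ρ - ((x : ℝ) - x0))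
    have b1 := Nat.floor_le (by linarith : 0 ≤ ρ - ((y : ℝ) - x0))
    have b2 := Nat.lt_floor_add_one (ρ - ((y : ℝ) - x0))
    rw [hxy] at a1 a2
    have c1 : (x : ℝ) < y + 1 := by linarith
    have c2 : (y : ℝ) < x + 1 := by linarith
    have d1 : x < y + 1 := by exact_mod_cast c1
    have d2 : y < x + 1 := by exact_mod_cast c2
    omega
  have hle : ∀ x ∈ X, 1 / √(M - γ * ((x : ℝ) - x0) ^ 2) ≤ G ⌊ρ - ((x : ℝ) - x0)⌋₊ := by
    intro x hx
    have hx' := hu x hx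
    obtain ⟨h0, h1⟩ := h x hx
    have a1 := Nat.floor_le (by linarith : 0 ≤ ρ - ((x : ℝ) - x0))
    set k := ⌊ρ - ((x : ℝ) - x0)⌋₊
    simp only [G]
    split_ifs with hk
    · rw [div_le_one (Real.sqrt_pos.mpr (by linarith))]
      exact Real.one_le_sqrt.mpr h1
    · have hk0 : (0 : ℝ) < k := by exact_mod_cast Nat.pos_of_ne_zero hk
      have h2 : ρ * k / 2 ≤ M - γ * ((x : ℝ) - x0) ^ 2 := by
        have e1 : ρ * k ≤ (ρ + (x - x0)) * (ρ - (x - x0)) := by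
          apply mul_le_mul <;> linarith
        have e2 : ρ * k / 2 ≤ γ * ((ρ + (x - x0)) * (ρ - (x - x0))) := by
          have : 0 ≤ ρ * k := by positivity
          nlinarith
        nlinarith
      have h3 : √(ρ * k / 2) ≤ √(M - γ * ((x : ℝ) - x0) ^ 2) := Real.sqrt_le_sqrt h2
      have h4 : √(ρ * k / 2) = √ρ * √k / √2 := by
        rw [Real.sqrt_div (by positivity), Real.sqrt_mul hρ0.le]
      have h5 : √2 / √ρ * (1 / √(k : ℝ)) = 1 / √(ρ * k / 2) := by
        rw [h4]; field_simp
      rw [h5]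
      exact one_div_le_one_div_of_le (Real.sqrt_pos.mpr (by positivity)) h3
  calc ∑ x ∈ X, 1 / √(M - γ * ((x : ℝ) - x0) ^ 2)
      ≤ ∑ x ∈ X, G ⌊ρ - ((x : ℝ) - x0)⌋₊ := Finset.sum_le_sum hle
    _ = ∑ k ∈ X.image (fun x : ℤ => ⌊ρ - ((x : ℝ) - x0)⌋₊), G k := by
        rw [Finset.sum_image hinj]
    _ ≤ ∑ k ∈ Finset.range (⌊ρ⌋₊ + 1), G k := by
        apply Finset.sum_le_sum_of_subset_of_nonneg
        · intro k hk
          rw [Finset.mem_image] at hk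
          obtain ⟨x, hx, rfl⟩ := hk
          rw [Finset.mem_range, Nat.lt_succ_iff]
          exact Nat.floor_mono (by linarith [(h x hx).1])
        · intro k _ _; exact hG0 k
    _ = √2 / √ρ * (∑ k ∈ Finset.range ⌊ρ⌋₊, 1 / √((k : ℝ) + 1)) + 1 := by
        rw [Finset.sum_range_succ', Finset.mul_sum]
        simp [G]
    _ ≤ √2 / √ρ * (2 * √ρ) + 1 := by
        have h1 := sum_inv_sqrt_le ⌊ρ⌋₊
        have h2 : √(⌊ρ⌋₊ : ℝ) ≤ √ρ := Real.sqrt_le_sqrt (Nat.floor_le hρ0.le)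
        have h3 : 0 ≤ √2 / √ρ := by positivity
        have := mul_le_mul_of_nonneg_left (h1.trans (mul_le_mul_of_nonneg_left h2 two_pos.le)) h3
        linarith
    _ = 2 * √2 + 1 := by
        have : √ρ ≠ 0 := (Real.sqrt_pos.mpr hρ0).ne'
        field_simp
    _ ≤ 4 := by
        have : √2 ≤ 3 / 2 := Real.sqrt_le_iff.mpr ⟨by norm_num, by norm_num⟩
        linarith

/-- The sum over integers of the inverse square root of a concave quadratic, restricted to the set
where the quadratic is at least `1`, is bounded uniformly in the size of the quadratic. -/
lemma sum_inv_sqrt_quad {X : Finset ℤ} {γ x0 M : ℝ} (hγ : 1 / 2 ≤ γ)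
    (h : ∀ x ∈ X, 1 ≤ M - γ * ((x : ℝ) - x0) ^ 2) :
    ∑ x ∈ X, 1 / √(M - γ * ((x : ℝ) - x0) ^ 2) ≤ 8 := by
  rw [← Finset.sum_filter_add_sum_filter_not X (fun x : ℤ => x0 ≤ x)]
  have h1 : ∑ x ∈ X.filter (fun x : ℤ => x0 ≤ x), 1 / √(M - γ * ((x : ℝ) - x0) ^ 2) ≤ 4 := by
    apply sum_inv_sqrt_quad_right hγ
    intro x hx
    rw [Finset.mem_filter] at hx
    exact ⟨hx.2, h x hx.1⟩
  have h2 : ∑ x ∈ X.filter (fun x : ℤ => ¬ x0 ≤ x), 1 / √(M - γ * ((x : ℝ) - x0) ^ 2) ≤ 4 := by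
    have h3 := sum_inv_sqrt_quad_right (X := (X.filter (fun x : ℤ => ¬ x0 ≤ x)).image Neg.neg)
      (γ := γ) (x0 := -x0) (M := M) hγ (by
        intro x hx
        rw [Finset.mem_image] at hx
        obtain ⟨y, hy, rfl⟩ := hx
        rw [Finset.mem_filter] at hy
        push_cast
        refine ⟨by linarith [hy.2], ?_⟩
        have := h y hy.1
        have e : (-(y : ℝ) - -x0) ^ 2 = (y - x0) ^ 2 := by ring
        rw [e]; exact this)
    rw [Finset.sum_image (fun a _ b _ hab => neg_injective hab)] at h3
    refine le_trans (le_of_eq ?_) h3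
    refine Finset.sum_congr rfl fun x _ => ?_
    push_cast
    have e : (-(x : ℝ) - -x0) ^ 2 = (x - x0) ^ 2 := by ring
    rw [e]
  linarith

lemma card_le_of_abs_le {X : Finset ℤ} {R : ℝ} (hR : 0 ≤ R) (h : ∀ x ∈ X, |(x : ℝ)| ≤ R) :
    (X.card : ℝ) ≤ 2 * R + 1 := by
  refine card_le_of_diff (by positivity) fun x hx y hy _ => ?_
  have h1 := abs_le.mp (h x hx)
  have h2 := abs_le.mp (h y hy)
  linarith

/-! ### Lattice points in elliptical annuli and in slabs -/

/-- Lattice points in the elliptical annulus `A ≤ γ (x - x₀(y))² + γ' (y - y₀)² + m₀ ≤ A + W`: at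
most a constant times the perimeter plus the area. The rows `y` split into those close to the
extreme rows of the inner ellipse, of which there are `O(√W)`, each with `O(√W)` points, and the
others, where the horizontal width of the annulus is `O(W / √(distance))` and
`sum_inv_sqrt_quad` applies. -/
lemma card_annulus {G : Finset (ℤ × ℤ)} {γ γ' y0 m0 A W R : ℝ} {x0 : ℤ → ℝ} (hγ : 1 ≤ γ)
    (hγ' : 1 ≤ γ') (hW : 1 ≤ W) (hR : 0 ≤ R)
    (h1 : ∀ q ∈ G, A ≤ γ * ((q.1 : ℝ) - x0 q.2) ^ 2 + (γ' * ((q.2 : ℝ) - y0) ^ 2 + m0))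
    (h2 : ∀ q ∈ G, γ * ((q.1 : ℝ) - x0 q.2) ^ 2 + (γ' * ((q.2 : ℝ) - y0) ^ 2 + m0) ≤ A + W)
    (h3 : ∀ q ∈ G, |(q.2 : ℝ)| ≤ R) :
    (G.card : ℝ) ≤ 2 * (2 * R + 1) + 40 * W := by
  classical
  have hsW : 1 ≤ √W := Real.one_le_sqrt.mpr hW
  have hsW2 : √W ^ 2 = W := Real.sq_sqrt (by linarith)
  set Y := G.image Prod.snd with hY
  let X : ℤ → Finset ℤ := fun y => (G.filter (fun q => q.2 = y)).image Prod.fst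
  have hXmem : ∀ y, ∀ x ∈ X y, (x, y) ∈ G := by
    intro y x hx
    simp only [X, Finset.mem_image, Finset.mem_filter] at hx
    obtain ⟨q, ⟨hq, rfl⟩, rfl⟩ := hx
    exact hq
  have hcard : (G.card : ℝ) = ∑ y ∈ Y, ((X y).card : ℝ) := by
    rw [Finset.card_eq_sum_card_image Prod.snd G]
    push_cast
    refine Finset.sum_congr rfl fun y _ => ?_
    rw [Finset.card_image_of_injOn]
    intro p hp q hq hpq
    simp only [Finset.coe_filter, Set.mem_ofPred_eq] at hp hq
    exact Prod.ext hpq (hp.2.trans hq.2.symm)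
  let m : ℤ → ℝ := fun y => γ' * ((y : ℝ) - y0) ^ 2 + m0
  have hwin : ∀ y, ∀ x ∈ X y, A - m y ≤ γ * ((x : ℝ) - x0 y) ^ 2 ∧
      γ * ((x : ℝ) - x0 y) ^ 2 ≤ A - m y + W := by
    intro y x hx
    have hm := hXmem y x hx
    have a := h1 _ hm
    have b := h2 _ hm
    simp only [m]
    constructor <;> linarith
  have hYc : (Y.card : ℝ) ≤ 2 * R + 1 := by
    apply card_le_of_abs_le hR
    intro y hy
    obtain ⟨q, hq, rfl⟩ := Finset.mem_image.mp hy
    exact h3 q hq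
  rw [hcard, ← Finset.sum_filter_add_sum_filter_not Y (fun y : ℤ => A - m y ≤ W)]
  have hI : ∑ y ∈ Y.filter (fun y : ℤ => A - m y ≤ W), ((X y).card : ℝ) ≤ 24 * W := by
    have hc : ((Y.filter (fun y : ℤ => A - m y ≤ W)).card : ℝ) ≤ 2 * (√(2 * W) + 1) := by
      apply card_quad_le_sqrt (γ := γ') (x0 := y0) (α := A - W - m0) hγ'
      intro y hy
      rw [Finset.mem_filter] at hy
      obtain ⟨hyY, hyW⟩ := hy
      obtain ⟨q, hq, rfl⟩ := Finset.mem_image.mp hyY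
      have b := h2 q hq
      have : 0 ≤ γ * ((q.1 : ℝ) - x0 q.2) ^ 2 := by positivity
      simp only [m] at hyW
      constructor <;> linarith
    have hf : ∀ y ∈ Y.filter (fun y : ℤ => A - m y ≤ W), ((X y).card : ℝ) ≤ 2 * (√W + 1) :=
      fun y _ => card_quad_le_sqrt hγ (hwin y)
    have hs := Finset.sum_le_card_nsmul _ _ _ hf
    rw [nsmul_eq_mul] at hs
    have h4 : √(2 * W) ≤ 2 * √W := by
      apply Real.sqrt_le_iff.mpr
      refine ⟨by positivity, ?_⟩
      nlinarith
    have h5 := mul_le_mul_of_nonneg_right (hc.trans (by linarith : _ ≤ 2 * (2 * √W + 1)))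
      (by positivity : 0 ≤ 2 * (√W + 1))
    nlinarith
  have hII : ∑ y ∈ Y.filter (fun y : ℤ => ¬ A - m y ≤ W), ((X y).card : ℝ)
      ≤ 2 * (2 * R + 1) + 16 * W := by
    have hf : ∀ y ∈ Y.filter (fun y : ℤ => ¬ A - m y ≤ W), ((X y).card : ℝ)
        ≤ 2 * W * (1 / √((A - m0) - γ' * ((y : ℝ) - y0) ^ 2)) + 2 := by
      intro y hy
      rw [Finset.mem_filter, not_le] at hy
      have := card_quad_le_div (α := A - m y) hγ (by linarith) (by linarith) (hwin y)
      have e : A - m y = (A - m0) - γ' * ((y : ℝ) - y0) ^ 2 := by simp only [m]; ring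
      rw [e] at this
      refine this.trans (le_of_eq (by ring))
    refine (Finset.sum_le_sum hf).trans ?_
    rw [Finset.sum_add_distrib, ← Finset.mul_sum, Finset.sum_const, nsmul_eq_mul]
    have hA : ∑ y ∈ Y.filter (fun y : ℤ => ¬ A - m y ≤ W),
        1 / √((A - m0) - γ' * ((y : ℝ) - y0) ^ 2) ≤ 8 := by
      apply sum_inv_sqrt_quad (by linarith)
      intro y hy
      rw [Finset.mem_filter, not_le] at hy
      have := hy.2
      simp only [m] at this
      linarith
    have hc : ((Y.filter (fun y : ℤ => ¬ A - m y ≤ W)).card : ℝ) ≤ Y.card := by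
      exact_mod_cast Finset.card_filter_le _ _
    have := mul_le_mul_of_nonneg_left hA (by linarith : 0 ≤ 2 * W)
    linarith
  linarith

/-- Lattice points of a slab orthogonal to `(a, b, c)`, of thickness one, that lie in a spherical
shell. Since `|c|` is the largest coordinate, the projection to the first two coordinates is at
most three-to-one, and it maps the points into an elliptical annulus: moving a point vertically
onto the face of the slab changes its squared norm by `O(kF)`. -/
lemma card_slab {F : Finset Z3} {a b c s L kF V : ℝ} (hc : 0 < c ^ 2) (ha : a ^ 2 ≤ c ^ 2)
    (hb : b ^ 2 ≤ c ^ 2) (hL0 : 0 ≤ L) (hL : L ^ 2 = a ^ 2 + b ^ 2 + c ^ 2) (hk : 1 ≤ kF)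
    (hV : 0 ≤ V)
    (h1 : ∀ p ∈ F, s ≤ a * p 0 + b * p 1 + c * p 2 ∧ a * p 0 + b * p 1 + c * p 2 ≤ s + L)
    (h2 : ∀ p ∈ F, kF ^ 2 ≤ nsq p ∧ nsq p ≤ kF ^ 2 + V)
    (h3 : ∀ p ∈ F, nsq p ≤ 36 * kF ^ 2) :
    (F.card : ℝ) ≤ 10000 * (kF + V) := by
  classical
  have hc0 : c ≠ 0 := by rintro rfl; norm_num at hc
  have hLc : L ≤ 2 * |c| := by
    apply le_of_sq_le_sq _ (by positivity)
    rw [mul_pow, sq_abs]; linarith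
  have hcpos : 0 < |c| := abs_pos.mpr hc0
  let π : Z3 → ℤ × ℤ := fun p => (p 0, p 1)
  have hfib : F.card ≤ 3 * (F.image π).card := by
    apply Finset.card_le_mul_card_image
    intro q hq
    have hinj : Set.InjOn (fun p : Z3 => p 2) (F.filter (fun p => π p = q)) := by
      intro p hp p' hp' hpp
      simp only [Finset.coe_filter, Set.mem_ofPred_eq, π] at hp hp'
      have e := hp.2.trans hp'.2.symm
      rw [Prod.mk.injEq] at e
      funext i
      fin_cases i
      · exact e.1
      · exact e.2
      · exact hpp
    rw [← Finset.card_image_of_injOn hinj]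
    have : ((((F.filter (fun p => π p = q)).image (fun p : Z3 => p 2)).card : ℕ) : ℝ) ≤ 2 + 1 := by
      apply card_le_of_diff (by norm_num)
      intro x hx y hy hxy
      obtain ⟨p, hp, rfl⟩ := Finset.mem_image.mp hx
      obtain ⟨p', hp', rfl⟩ := Finset.mem_image.mp hy
      rw [Finset.mem_filter] at hp hp'
      have e := hp.2.trans hp'.2.symm
      simp only [π, Prod.mk.injEq] at e
      have i1 := h1 p hp.1
      have i2 := h1 p' hp'.1
      rw [e.1, e.2] at i1
      have : |c * ((p' 2 : ℝ) - p 2)| ≤ L := abs_le.mpr ⟨by linarith, by linarith⟩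
      rw [abs_mul] at this
      have h5 : |c| * |(p' 2 : ℝ) - p 2| ≤ |c| * 2 := by linarith
      exact (le_abs_self _).trans (le_of_mul_le_mul_left h5 hcpos)
    have h6 : ((((F.filter (fun p => π p = q)).image (fun p : Z3 => p 2)).card : ℕ) : ℝ)
      ≤ ((3 : ℕ) : ℝ) := by push_cast; linarith
    exact_mod_cast h6
  -- slopes of the face `z = σ - e x - f y` of the slab, then the square completed in `x` and `y`
  set e := a / c with he
  set f := b / c with hf
  set σ := s / c with hσ
  set γ := 1 + e ^ 2 with hγ
  have hγ1 : 1 ≤ γ := by nlinarith [sq_nonneg e]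
  set γ' := 1 + f ^ 2 / γ with hγ'
  have hγ'1 : 1 ≤ γ' := by
    have : 0 ≤ f ^ 2 / γ := by positivity
    linarith
  set y0 := σ * f / γ / γ' with hy0
  set m0 := σ ^ 2 / γ - γ' * y0 ^ 2 with hm0
  have hsq : ∀ x y : ℝ, γ * (x - e * (σ - f * y) / γ) ^ 2 + (γ' * (y - y0) ^ 2 + m0)
      = x ^ 2 + y ^ 2 + (σ - e * x - f * y) ^ 2 := by
    intro x y
    have g0 : γ ≠ 0 := by linarith
    have g0' : γ' ≠ 0 := by linarith
    have E1 : γ' * (y - y0) ^ 2 + m0 = y ^ 2 + (σ - f * y) ^ 2 / γ := by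
      have : γ' * y0 = σ * f / γ := by rw [hy0]; field_simp
      have : γ' * (y - y0) ^ 2 + m0 = γ' * y ^ 2 - 2 * (γ' * y0) * y + σ ^ 2 / γ := by
        rw [hm0]; ring
      rw [this, ‹γ' * y0 = σ * f / γ›, hγ']
      field_simp
      ring
    rw [E1]
    have E2 : γ * (x - e * (σ - f * y) / γ) ^ 2
        = γ * x ^ 2 - 2 * x * (e * (σ - f * y)) + (e * (σ - f * y)) ^ 2 / γ := by
      field_simp
      ring
    have E3 : (e * (σ - f * y)) ^ 2 / γ + (σ - f * y) ^ 2 / γ = (σ - f * y) ^ 2 := by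
      rw [← add_div, div_eq_iff g0, hγ]; ring
    have E4 : γ * x ^ 2 - 2 * x * (e * (σ - f * y)) + ((e * (σ - f * y)) ^ 2 / γ
      + (σ - f * y) ^ 2 / γ) + y ^ 2 = x ^ 2 + y ^ 2 + (σ - e * x - f * y) ^ 2 := by
      rw [E3, hγ]; ring
    rw [E2]; linarith
  have hnsq : ∀ p : Z3, nsq p = (p 0 : ℝ) ^ 2 + (p 1 : ℝ) ^ 2 + (p 2 : ℝ) ^ 2 := by
    intro p; simp [nsq, Fin.sum_univ_three]
  have hQ : ∀ p ∈ F, |(p 0 : ℝ) ^ 2 + (p 1 : ℝ) ^ 2 + (σ - e * p 0 - f * p 1) ^ 2 - nsq p|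
      ≤ 28 * kF := by
    intro p hp
    obtain ⟨i1, i2⟩ := h1 p hp
    have i3 := h3 p hp
    rw [hnsq] at i3 ⊢
    set δ := (p 2 : ℝ) - (σ - e * p 0 - f * p 1) with hδ
    have hz : |(p 2 : ℝ)| ≤ 6 * kF := by
      apply abs_le_of_sq_le_sq _ (by linarith)
      nlinarith [sq_nonneg (p 0 : ℝ), sq_nonneg (p 1 : ℝ)]
    have hcδ : c * δ = a * p 0 + b * p 1 + c * p 2 - s := by
      rw [hδ, he, hf, hσ]; field_simp; ring
    have hδ2 : |δ| ≤ 2 := by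
      have : |c * δ| ≤ L := by rw [hcδ]; exact abs_le.mpr ⟨by linarith, by linarith⟩
      rw [abs_mul] at this
      have h5 : |c| * |δ| ≤ |c| * 2 := by linarith
      exact le_of_mul_le_mul_left h5 hcpos
    have E : (p 0 : ℝ) ^ 2 + (p 1 : ℝ) ^ 2 + (σ - e * p 0 - f * p 1) ^ 2
        - ((p 0 : ℝ) ^ 2 + (p 1 : ℝ) ^ 2 + (p 2 : ℝ) ^ 2) = δ * (δ - 2 * p 2) := by
      rw [hδ]; ring
    rw [E, abs_mul]
    have h6 : |δ - 2 * p 2| ≤ 2 + 2 * (6 * kF) := by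
      refine (abs_sub _ _).trans ?_
      rw [abs_mul, abs_two]; linarith
    have h7 := mul_le_mul hδ2 h6 (abs_nonneg _) (by norm_num)
    linarith
  have hann : ((F.image π).card : ℝ) ≤ 2 * (2 * (6 * kF) + 1) + 40 * (56 * kF + V) := by
    apply card_annulus (γ := γ) (γ' := γ') (y0 := y0) (m0 := m0) (A := kF ^ 2 - 28 * kF)
      (x0 := fun y : ℤ => e * (σ - f * y) / γ) hγ1 hγ'1 (by linarith) (by linarith)
    · intro q hq
      obtain ⟨p, hp, rfl⟩ := Finset.mem_image.mp hq
      have i := (abs_le.mp (hQ p hp)).1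
      have j := (h2 p hp).1
      simp only [π]
      rw [hsq]; linarith
    · intro q hq
      obtain ⟨p, hp, rfl⟩ := Finset.mem_image.mp hq
      have i := (abs_le.mp (hQ p hp)).2
      have j := (h2 p hp).2
      simp only [π]
      rw [hsq]; linarith
    · intro q hq
      obtain ⟨p, hp, rfl⟩ := Finset.mem_image.mp hq
      have i3 := h3 p hp
      rw [hnsq] at i3
      apply abs_le_of_sq_le_sq _ (by linarith)
      simp only [π]
      nlinarith [sq_nonneg (p 0 : ℝ), sq_nonneg (p 2 : ℝ)]
  have hcast : (F.card : ℝ) ≤ 3 * ((F.image π).card : ℝ) := by exact_mod_cast hfib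
  linarith

/-! ### Geometry of the lens -/

/-- The Euclidean inner product on `ℤ³`, with real values. -/
def dot (p q : Z3) : ℝ := ∑ i, (p i : ℝ) * (q i : ℝ)

lemma nsq_eq (p : Z3) : nsq p = (p 0 : ℝ) ^ 2 + (p 1 : ℝ) ^ 2 + (p 2 : ℝ) ^ 2 := by
  simp [nsq, Fin.sum_univ_three]

lemma dot_eq (p q : Z3) :
    dot p q = (p 0 : ℝ) * q 0 + (p 1 : ℝ) * q 1 + (p 2 : ℝ) * q 2 := by
  simp [dot, Fin.sum_univ_three]

lemma nsq_nonneg (p : Z3) : 0 ≤ nsq p := Finset.sum_nonneg fun _ _ => sq_nonneg _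

lemma nsq_cast (p : Z3) : nsq p = ((∑ i, (p i) ^ 2 : ℤ) : ℝ) := by simp [nsq]

lemma one_le_nsq {ℓ : Z3} (h : ℓ ≠ 0) : 1 ≤ nsq ℓ := by
  obtain ⟨i, hi⟩ : ∃ i, ℓ i ≠ 0 := by
    by_contra hcon
    push Not at hcon
    exact h (funext hcon)
  rw [nsq_cast]
  have : 0 < ∑ i, (ℓ i) ^ 2 :=
    Finset.sum_pos' (fun _ _ => sq_nonneg _) ⟨i, Finset.mem_univ _, by positivity⟩
  exact_mod_cast this

lemma lam_eq_dot (ℓ p : Z3) : lam ℓ p = dot p ℓ - nsq ℓ / 2 := by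
  simp only [lam, nsq_eq, dot_eq, Pi.sub_apply]
  push_cast; ring

lemma dot_sq_le (p q : Z3) : dot p q ^ 2 ≤ nsq p * nsq q := Finset.sum_mul_sq_le_sq_mul_sq _ _ _

lemma half_le_lam {kF : ℝ} {ℓ p : Z3} (hp : p ∈ lens kF ℓ) : 1 / 2 ≤ lam ℓ p := by
  have h1 : kF ^ 2 < nsq p := not_le.mp hp.1
  have h2 : nsq (p - ℓ) ≤ kF ^ 2 := hp.2
  have h3 : nsq (p - ℓ) < nsq p := by linarith
  rw [nsq_cast, nsq_cast] at h3
  have h4 : (∑ i, ((p - ℓ) i) ^ 2 : ℤ) < ∑ i, (p i) ^ 2 := by exact_mod_cast h3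
  have h5 : (∑ i, ((p - ℓ) i) ^ 2 : ℤ) + 1 ≤ ∑ i, (p i) ^ 2 := h4
  have h6 : nsq (p - ℓ) + 1 ≤ nsq p := by rw [nsq_cast, nsq_cast]; exact_mod_cast h5
  unfold lam; linarith

/-- A line parallel to `ℓ` leaves the ball only once, so it meets the lens at most once in each
residue class modulo `ℓ`. -/
lemma lens_translate {kF : ℝ} {ℓ p p' : Z3} (hp : p ∈ lens kF ℓ) (hp' : p' ∈ lens kF ℓ)
    {n : ℤ} (h : p' = p + n • ℓ) : n ≤ 0 := by
  by_contra hn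
  push Not at hn
  have hn1 : (1 : ℝ) ≤ n := by exact_mod_cast hn
  have h1 : kF ^ 2 < nsq p := not_le.mp hp.1
  have h2 : nsq (p' - ℓ) ≤ kF ^ 2 := hp'.2
  have h3 := half_le_lam hp
  rw [lam_eq_dot] at h3
  have h4 : nsq (p' - ℓ) = nsq p + 2 * (n - 1) * dot p ℓ + (n - 1) ^ 2 * nsq ℓ := by
    subst h
    simp only [nsq_eq, dot_eq, Pi.sub_apply, Pi.add_apply, Pi.smul_apply, smul_eq_mul]
    push_cast; ring
  have h5 : 0 ≤ (n - 1 : ℝ) * dot p ℓ :=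
    mul_nonneg (by linarith) (by linarith [nsq_nonneg ℓ])
  have h6 : 0 ≤ (n - 1 : ℝ) ^ 2 * nsq ℓ := mul_nonneg (sq_nonneg _) (nsq_nonneg _)
  linarith

lemma ball_subset (kF : ℝ) (hk : 0 ≤ kF) :
    BF kF ⊆ (Finset.Icc (fun _ => -⌊kF⌋ : Z3) (fun _ => ⌊kF⌋) : Set Z3) := by
  intro p hp
  have hp' : nsq p ≤ kF ^ 2 := hp
  have h : ∀ i, |(p i : ℝ)| ≤ kF := by
    intro i
    apply abs_le_of_sq_le_sq _ hk
    refine le_trans ?_ hp'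
    exact Finset.single_le_sum (f := fun i => (p i : ℝ) ^ 2) (fun _ _ => sq_nonneg _)
      (Finset.mem_univ i)
  rw [Finset.mem_coe, Finset.mem_Icc]
  constructor
  · intro i
    have := (abs_le.mp (h i)).1
    have h2 : -p i ≤ ⌊kF⌋ := Int.le_floor.mpr (by push_cast; linarith)
    change -⌊kF⌋ ≤ p i
    linarith
  · intro i
    exact Int.le_floor.mpr (abs_le.mp (h i)).2

lemma lens_finite (kF : ℝ) (hk : 0 ≤ kF) (ℓ : Z3) : (lens kF ℓ).Finite := by
  have h1 : (BF kF).Finite := (Finset.finite_toSet _).subset (ball_subset kF hk)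
  refine (h1.image (fun q => q + ℓ)).subset fun p hp => ⟨p - ℓ, hp.2, by simp⟩

lemma card_lens_le {kF : ℝ} (hk : 1 ≤ kF) {ℓ : Z3} {F : Finset Z3} (hF : ∀ p ∈ F, p ∈ lens kF ℓ) :
    (F.card : ℝ) ≤ 27 * kF ^ 3 := by
  have hsub : F.image (fun p => p - ℓ) ⊆ Finset.Icc (fun _ => -⌊kF⌋ : Z3) (fun _ => ⌊kF⌋) := by
    intro q hq
    obtain ⟨p, hp, rfl⟩ := Finset.mem_image.mp hq
    exact Finset.mem_coe.mp (ball_subset kF (by linarith) (hF p hp).2)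
  have h1 := Finset.card_le_card hsub
  rw [Finset.card_image_of_injective _ (sub_left_injective), Pi.card_Icc] at h1
  simp only [Int.card_Icc, Finset.prod_const, Finset.card_univ, Fintype.card_fin] at h1
  have h0 : 0 ≤ ⌊kF⌋ := Int.floor_nonneg.mpr (by linarith)
  have h2 : (((⌊kF⌋ + 1 - -⌊kF⌋).toNat : ℕ) : ℝ) = 2 * ⌊kF⌋ + 1 := by
    have : (((⌊kF⌋ + 1 - -⌊kF⌋).toNat : ℕ) : ℤ) = 2 * ⌊kF⌋ + 1 := by omega
    exact_mod_cast this
  have h3 : (F.card : ℝ) ≤ (((⌊kF⌋ + 1 - -⌊kF⌋).toNat : ℕ) : ℝ) ^ 3 := by exact_mod_cast h1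
  have h4 : (2 * ⌊kF⌋ + 1 : ℝ) ≤ 3 * kF := by linarith [Int.floor_le kF]
  have h5 : (0 : ℝ) ≤ 2 * ⌊kF⌋ + 1 := by
    have : (0 : ℝ) ≤ ⌊kF⌋ := by exact_mod_cast h0
    linarith
  rw [h2] at h3
  refine h3.trans ((pow_le_pow_left₀ h5 h4 3).trans (le_of_eq (by ring)))

/-! ### The lens sum -/

/-- If `|ℓ| ≥ 4 kF`, the two balls are far apart and every `λ` is at least `|ℓ|² / 4`. -/
lemma sum_far {kF : ℝ} (hk : 1 ≤ kF) {ℓ : Z3} (hℓ : 16 * kF ^ 2 ≤ nsq ℓ) {F : Finset Z3}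
    (hF : ∀ p ∈ F, p ∈ lens kF ℓ) : ∑ p ∈ F, (lam ℓ p)⁻¹ ≤ 7 * kF := by
  have hb : ∀ p ∈ F, (lam ℓ p)⁻¹ ≤ (4 * kF ^ 2)⁻¹ := by
    intro p hp
    apply inv_anti₀ (by positivity)
    have h2 : nsq (p - ℓ) ≤ kF ^ 2 := (hF p hp).2
    have h3 : lam ℓ p = dot (p - ℓ) ℓ + nsq ℓ / 2 := by
      simp only [lam, nsq_eq, dot_eq, Pi.sub_apply]
      push_cast; ring
    have h4 : |dot (p - ℓ) ℓ| ≤ nsq ℓ / 4 := by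
      apply abs_le_of_sq_le_sq _ (by linarith [nsq_nonneg ℓ])
      refine (dot_sq_le _ _).trans ?_
      nlinarith [nsq_nonneg ℓ, nsq_nonneg (p - ℓ)]
    linarith [(abs_le.mp h4).1]
  have h1 := Finset.sum_le_card_nsmul _ _ _ hb
  rw [nsmul_eq_mul] at h1
  have h2 := mul_le_mul_of_nonneg_right (card_lens_le hk hF)
    (by positivity : 0 ≤ (4 * kF ^ 2)⁻¹)
  have h3 : 27 * kF ^ 3 * (4 * kF ^ 2)⁻¹ = 27 / 4 * kF := by field_simp
  linarith

/-- The part `λ < |ℓ|²`: the lens is cut into slabs of thickness one orthogonal to `ℓ`, on the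
`k`-th of which `λ` lies between `k|ℓ|` and `(k+1)|ℓ|`. There are at most `|ℓ| + 1` slabs, each with
`O(kF + (k+1)|ℓ|)` points. -/
lemma sum_low {kF : ℝ} (hk : 1 ≤ kF) {ℓ : Z3} (h1ℓ : 1 ≤ nsq ℓ) (hℓ : nsq ℓ ≤ 16 * kF ^ 2)
    (h0 : (ℓ 0 : ℝ) ^ 2 ≤ (ℓ 2 : ℝ) ^ 2) (h1 : (ℓ 1 : ℝ) ^ 2 ≤ (ℓ 2 : ℝ) ^ 2)
    {F : Finset Z3} (hF : ∀ p ∈ F, p ∈ lens kF ℓ) (hF2 : ∀ p ∈ F, lam ℓ p < nsq ℓ) :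
    ∑ p ∈ F, (lam ℓ p)⁻¹ ≤ 1000000 * kF := by
  classical
  set L := √(nsq ℓ) with hL
  have hL2 : L ^ 2 = nsq ℓ := Real.sq_sqrt (by linarith)
  have hL1 : 1 ≤ L := Real.one_le_sqrt.mpr h1ℓ
  have hLk : L ≤ 4 * kF := by
    apply le_of_sq_le_sq _ (by linarith)
    rw [hL2]; linarith
  let κ : Z3 → ℕ := fun p => ⌊lam ℓ p / L⌋₊
  have hκ : ∀ p ∈ F, κ p * L ≤ lam ℓ p ∧ lam ℓ p ≤ (κ p + 1) * L ∧ κ p ≤ ⌊L⌋₊ := by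
    intro p hp
    have hpos : 0 ≤ lam ℓ p / L := div_nonneg (by linarith [half_le_lam (hF p hp)]) (by linarith)
    refine ⟨?_, ?_, ?_⟩
    · exact (le_div_iff₀ (by linarith)).mp (Nat.floor_le hpos)
    · exact ((div_lt_iff₀ (by linarith)).mp (Nat.lt_floor_add_one _)).le
    · apply Nat.floor_mono
      rw [div_le_iff₀ (by linarith), ← sq, hL2]
      exact (hF2 p hp).le
  have hslab : ∀ k : ℕ, ((F.filter (fun p => κ p = k)).card : ℝ)
      ≤ 10000 * (kF + 2 * (k + 1) * L) := by
    intro k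
    have e := hL2
    rw [nsq_eq] at e
    refine card_slab (a := ℓ 0) (b := ℓ 1) (c := ℓ 2) (s := k * L + nsq ℓ / 2) (L := L) ?_ h0 h1
      (by linarith) e hk (by positivity) ?_ ?_ ?_
    · rw [nsq_eq] at h1ℓ; nlinarith
    · intro p hp
      obtain ⟨hpF, rfl⟩ := Finset.mem_filter.mp hp
      obtain ⟨i1, i2, -⟩ := hκ p hpF
      rw [lam_eq_dot, dot_eq] at i1 i2
      constructor <;> linarith
    · intro p hp
      obtain ⟨hpF, rfl⟩ := Finset.mem_filter.mp hp
      obtain ⟨-, i2, -⟩ := hκ p hpF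
      have j1 : kF ^ 2 < nsq p := not_le.mp (hF p hpF).1
      have j2 : nsq (p - ℓ) ≤ kF ^ 2 := (hF p hpF).2
      unfold lam at i2
      constructor <;> linarith
    · intro p hp
      obtain ⟨hp, -⟩ := Finset.mem_filter.mp hp
      have i := hF2 p hp
      have j2 : nsq (p - ℓ) ≤ kF ^ 2 := (hF p hp).2
      unfold lam at i
      nlinarith
  have hterm : ∀ k : ℕ, ∑ p ∈ F.filter (fun p => κ p = k), (lam ℓ p)⁻¹
      ≤ if k = 0 then 180000 * kF else 10000 * (kF / L) + 40000 := by
    intro k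
    split_ifs with hk0
    · have hb : ∀ p ∈ F.filter (fun p => κ p = k), (lam ℓ p)⁻¹ ≤ 2 := by
        intro p hp
        obtain ⟨hp, -⟩ := Finset.mem_filter.mp hp
        rw [inv_le_comm₀ (by linarith [half_le_lam (hF p hp)]) two_pos]
        linarith [half_le_lam (hF p hp)]
      have h3 := Finset.sum_le_card_nsmul _ _ _ hb
      rw [nsmul_eq_mul] at h3
      have h4 := hslab k
      have h5 : (k : ℝ) = 0 := by exact_mod_cast hk0
      rw [h5] at h4
      linarith
    · have hk1 : (1 : ℝ) ≤ k := by exact_mod_cast Nat.one_le_iff_ne_zero.mpr hk0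
      have hkL : 0 < (k : ℝ) * L := by positivity
      have hb : ∀ p ∈ F.filter (fun p => κ p = k), (lam ℓ p)⁻¹ ≤ (k * L)⁻¹ := by
        intro p hp
        obtain ⟨hpF, rfl⟩ := Finset.mem_filter.mp hp
        exact inv_anti₀ hkL (hκ p hpF).1
      have h3 := Finset.sum_le_card_nsmul _ _ _ hb
      rw [nsmul_eq_mul] at h3
      refine h3.trans ?_
      have h4 := mul_le_mul_of_nonneg_right (hslab k) (inv_nonneg.mpr hkL.le)
      refine h4.trans ?_
      rw [← div_eq_mul_inv, div_le_iff₀ hkL]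
      have e : (10000 * (kF / L) + 40000) * (k * L) = 10000 * (kF * k) + 40000 * (k * L) := by
        field_simp
      rw [e]
      nlinarith
  rw [← Finset.sum_fiberwise_of_maps_to (t := Finset.range (⌊L⌋₊ + 1)) (g := κ)
    (fun p hp => Finset.mem_range.mpr (Nat.lt_succ_of_le (hκ p hp).2.2))]
  refine (Finset.sum_le_sum fun k _ => hterm k).trans ?_
  rw [Finset.sum_range_succ']
  simp only [Nat.add_eq_zero_iff, one_ne_zero, and_false, if_false, if_true, Finset.sum_const,
    Finset.card_range, nsmul_eq_mul]
  have hfl : (⌊L⌋₊ : ℝ) ≤ L := Nat.floor_le (by linarith)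
  have h6 := mul_le_mul_of_nonneg_right hfl (by positivity : 0 ≤ 10000 * (kF / L) + 40000)
  have h7 : L * (10000 * (kF / L) + 40000) = 10000 * kF + 40000 * L := by
    field_simp
  linarith

/-- The part `λ ≥ |ℓ|²`: if `h(p)` denotes half the length of the chord of the ball on the line
through `p` parallel to `ℓ`, then `λ ≥ (2/3)|ℓ| h` and `2h ≥ |ℓ|`. Each class modulo `ℓ` on such a
line is represented by its point with third coordinate in `[0, |ℓ₂|)`. When the last two coordinates
of this point are fixed, `4h²` is a concave quadratic in the first one, and `sum_inv_sqrt_quad` bounds the sum over it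
by a constant divided by `|ℓ|`; there are `O(kF)` times `O(|ℓ|)` choices for the other two. -/
lemma sum_high {kF : ℝ} (hk : 1 ≤ kF) {ℓ : Z3} (h1ℓ : 1 ≤ nsq ℓ) (hℓ : nsq ℓ ≤ 16 * kF ^ 2)
    (h0 : (ℓ 0 : ℝ) ^ 2 ≤ (ℓ 2 : ℝ) ^ 2) (h1 : (ℓ 1 : ℝ) ^ 2 ≤ (ℓ 2 : ℝ) ^ 2)
    {F : Finset Z3} (hF : ∀ p ∈ F, p ∈ lens kF ℓ) (hF2 : ∀ p ∈ F, nsq ℓ ≤ lam ℓ p) :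
    ∑ p ∈ F, (lam ℓ p)⁻¹ ≤ 1000 * kF := by
  classical
  set N := nsq ℓ with hN
  set L := √N with hL
  have hN0 : 0 < N := by linarith
  have hL2 : L ^ 2 = N := Real.sq_sqrt (by linarith)
  have hL1 : 1 ≤ L := Real.one_le_sqrt.mpr h1ℓ
  have hL0 : 0 < L := by linarith
  have hLk : L ≤ 4 * kF := by
    apply le_of_sq_le_sq _ (by linarith)
    rw [hL2]; linarith
  have hNe : N = (ℓ 0 : ℝ) ^ 2 + (ℓ 1 : ℝ) ^ 2 + (ℓ 2 : ℝ) ^ 2 := nsq_eq ℓ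
  have hc : ℓ 2 ≠ 0 := by
    intro h
    rw [h] at h0 h1 hNe
    push_cast at h0 h1 hNe
    nlinarith
  have hcL : |(ℓ 2 : ℝ)| ≤ L := by
    apply abs_le_of_sq_le_sq _ hL0.le
    rw [hL2, hNe]; nlinarith [sq_nonneg (ℓ 0 : ℝ), sq_nonneg (ℓ 1 : ℝ)]
  -- `H p = 4 h(p)²`
  let H : Z3 → ℝ := fun p => 4 * (kF ^ 2 - nsq p + dot p ℓ ^ 2 / N)
  have hH1 : ∀ p ∈ F, 1 ≤ H p := by
    intro p hp
    have j2 : nsq (p - ℓ) ≤ kF ^ 2 := (hF p hp).2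
    have i := hF2 p hp
    have e1 : lam ℓ p = dot p ℓ - N / 2 := lam_eq_dot ℓ p
    have e2 : nsq (p - ℓ) = nsq p - 2 * lam ℓ p := by unfold lam; ring
    have e3 : H p = 4 * (kF ^ 2 - nsq (p - ℓ)) + 4 * (lam ℓ p - N / 2) ^ 2 / N := by
      simp only [H]
      have : dot p ℓ = lam ℓ p + N / 2 := by linarith
      rw [e2, this]; field_simp; ring
    have e4 : N ≤ 4 * (lam ℓ p - N / 2) ^ 2 / N := by
      rw [le_div_iff₀ hN0]; nlinarith
    linarith
  have hlam : ∀ p ∈ F, (lam ℓ p)⁻¹ ≤ 3 / L * (1 / √(H p)) := by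
    intro p hp
    have hHp := hH1 p hp
    have j1 : kF ^ 2 < nsq p := not_le.mp (hF p hp).1
    have i := hF2 p hp
    have e1 : dot p ℓ = lam ℓ p + N / 2 := by
      have : lam ℓ p = dot p ℓ - N / 2 := lam_eq_dot ℓ p
      linarith
    have hs : 0 < √(H p) := Real.sqrt_pos.mpr (by linarith)
    have e2 : H p * N ≤ (3 * lam ℓ p) ^ 2 := by
      have : H p * N = 4 * (kF ^ 2 - nsq p) * N + 4 * dot p ℓ ^ 2 := by
        simp only [H]; field_simp
      rw [this, e1]
      nlinarith
    have e3 : √(H p) * L ≤ 3 * lam ℓ p := by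
      apply le_of_sq_le_sq _ (by linarith)
      rw [mul_pow, hL2, Real.sq_sqrt (by linarith)]; exact e2
    rw [div_mul_div_comm, mul_one, le_div_iff₀ (by positivity),
      inv_mul_le_iff₀ (by linarith)]
    linarith
  let J : Z3 → ℤ := fun p => p 2 / ℓ 2
  let X : Z3 → ℤ := fun p => p 0 - J p * ℓ 0
  let κ : Z3 → ℤ × ℤ := fun p => (p 1 - J p * ℓ 1, p 2 % ℓ 2)
  have hr : ∀ p, p 2 % ℓ 2 = p 2 - J p * ℓ 2 := by
    intro p
    have := Int.emod_add_mul_ediv (p 2) (ℓ 2)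
    simp only [J]; linarith
  have hinj : ∀ p ∈ F, ∀ p' ∈ F, κ p = κ p' → X p = X p' → p = p' := by
    intro p hp p' hp' h2 h3
    simp only [κ, Prod.mk.injEq, hr] at h2
    simp only [X] at h3
    have e : ∀ q q' : Z3, q 0 - J q * ℓ 0 = q' 0 - J q' * ℓ 0 →
        q 1 - J q * ℓ 1 = q' 1 - J q' * ℓ 1 → q 2 - J q * ℓ 2 = q' 2 - J q' * ℓ 2 →
        q' = q + (J q' - J q) • ℓ := by
      intro q q' a0 a1 a2
      funext i
      simp only [Pi.add_apply, Pi.smul_apply, smul_eq_mul]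
      fin_cases i
      · change q' 0 = q 0 + (J q' - J q) * ℓ 0; linarith
      · change q' 1 = q 1 + (J q' - J q) * ℓ 1; linarith
      · change q' 2 = q 2 + (J q' - J q) * ℓ 2; linarith
    have e1 := e p p' h3 h2.1 h2.2
    have e2 := e p' p h3.symm h2.1.symm h2.2.symm
    have l1 := lens_translate (hF p hp) (hF p' hp') e1
    have l2 := lens_translate (hF p' hp') (hF p hp) e2
    have l3 : J p' - J p = 0 := by linarith
    rw [l3] at e1
    simpa using e1.symm
  have hfib : ∀ q : ℤ × ℤ, ∑ p ∈ F.filter (fun p => κ p = q), (lam ℓ p)⁻¹ ≤ 24 / L := by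
    intro q
    -- `H` depends on `p` modulo `ℓ` only; completing the square in `X p`
    set γ := 4 * (1 - (ℓ 0 : ℝ) ^ 2 / N) with hγ
    have hγ1 : 1 / 2 ≤ γ := by
      have : (ℓ 0 : ℝ) ^ 2 / N ≤ 1 / 2 := by
        rw [div_le_iff₀ hN0, hNe]; nlinarith [sq_nonneg (ℓ 1 : ℝ)]
      linarith
    set w := (ℓ 1 : ℝ) * q.1 + ℓ 2 * q.2 with hw
    set x0 := 4 * ℓ 0 * w / N / γ with hx0
    set M := 4 * (kF ^ 2 - (q.1 : ℝ) ^ 2 - (q.2 : ℝ) ^ 2 + w ^ 2 / N) + γ * x0 ^ 2 with hM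
    have hHX : ∀ p, κ p = q → H p = M - γ * ((X p : ℝ) - x0) ^ 2 := by
      intro p hp
      have a1 : q.1 = p 1 - J p * ℓ 1 := by rw [← hp]
      have a2 : q.2 = p 2 - J p * ℓ 2 := by rw [← hp, ← hr]
      have b0 : (p 0 : ℝ) = X p + J p * ℓ 0 := by simp only [X]; push_cast; ring
      have b1 : (p 1 : ℝ) = q.1 + J p * ℓ 1 := by rw [a1]; push_cast; ring
      have b2 : (p 2 : ℝ) = q.2 + J p * ℓ 2 := by rw [a2]; push_cast; ring
      have c1 : dot p ℓ = (X p * ℓ 0 + w) + J p * N := by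
        rw [dot_eq, b0, b1, b2, hw, hNe]; ring
      have c2 : nsq p = (X p : ℝ) ^ 2 + (q.1 : ℝ) ^ 2 + (q.2 : ℝ) ^ 2
          + 2 * J p * (X p * ℓ 0 + w) + (J p : ℝ) ^ 2 * N := by
        rw [nsq_eq, b0, b1, b2, hw, hNe]; ring
      have c3 : γ * x0 = 4 * ℓ 0 * w / N := by
        have : γ ≠ 0 := by linarith
        rw [hx0]; field_simp
      have c4 : M - γ * ((X p : ℝ) - x0) ^ 2
          = 4 * (kF ^ 2 - (q.1 : ℝ) ^ 2 - (q.2 : ℝ) ^ 2 + w ^ 2 / N) - γ * (X p : ℝ) ^ 2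
            + 2 * (γ * x0) * X p := by
        rw [hM]; ring
      rw [c4, c3, hγ]
      simp only [H]
      rw [c1, c2]
      field_simp
      ring
    have hXinj : Set.InjOn X (F.filter (fun p => κ p = q)) := by
      intro p hp p' hp' hpp
      rw [Finset.mem_coe, Finset.mem_filter] at hp hp'
      exact hinj p hp.1 p' hp'.1 (hp.2.trans hp'.2.symm) hpp
    have hS := sum_inv_sqrt_quad (X := (F.filter (fun p => κ p = q)).image X) (γ := γ)
      (x0 := x0) (M := M) hγ1 (by
        intro x hx
        obtain ⟨p, hp, rfl⟩ := Finset.mem_image.mp hx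
        obtain ⟨hp, hpq⟩ := Finset.mem_filter.mp hp
        rw [← hHX p hpq]
        exact hH1 p hp)
    rw [Finset.sum_image hXinj] at hS
    calc ∑ p ∈ F.filter (fun p => κ p = q), (lam ℓ p)⁻¹
        ≤ ∑ p ∈ F.filter (fun p => κ p = q),
            3 / L * (1 / √(M - γ * ((X p : ℝ) - x0) ^ 2)) := by
          apply Finset.sum_le_sum
          intro p hp
          obtain ⟨hp, hpq⟩ := Finset.mem_filter.mp hp
          rw [← hHX p hpq]
          exact hlam p hp
      _ ≤ 3 / L * 8 := by
          rw [← Finset.mul_sum]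
          exact mul_le_mul_of_nonneg_left hS (by positivity)
      _ = 24 / L := by ring
  have hcardκ : ((F.image κ).card : ℝ) ≤ (29 * kF) * L := by
    have hsub : F.image κ ⊆ (F.image (fun p => (κ p).1)) ×ˢ (Finset.Ico 0 |ℓ 2|) := by
      intro q hq
      obtain ⟨p, hp, rfl⟩ := Finset.mem_image.mp hq
      rw [Finset.mem_product]
      refine ⟨Finset.mem_image.mpr ⟨p, hp, rfl⟩, ?_⟩
      rw [Finset.mem_Ico]
      exact ⟨Int.emod_nonneg _ hc, Int.emod_lt_abs _ hc⟩
    have h2 := Finset.card_le_card hsub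
    rw [Finset.card_product, Int.card_Ico, sub_zero] at h2
    have h3 : (((|ℓ 2|).toNat : ℕ) : ℝ) = |(ℓ 2 : ℝ)| := by
      have : (((|ℓ 2|).toNat : ℕ) : ℤ) = |ℓ 2| := Int.toNat_of_nonneg (abs_nonneg _)
      exact_mod_cast this
    have h4 : ((F.image (fun p => (κ p).1)).card : ℝ) ≤ 2 * (14 * kF) + 1 := by
      apply card_le_of_abs_le (by linarith)
      intro y hy
      obtain ⟨p, hp, rfl⟩ := Finset.mem_image.mp hy
      have j2 : nsq (p - ℓ) ≤ kF ^ 2 := (hF p hp).2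
      have hq : ∀ i, |((p - ℓ) i : ℝ)| ≤ kF := by
        intro i
        apply abs_le_of_sq_le_sq _ (by linarith)
        refine le_trans ?_ j2
        exact Finset.single_le_sum (f := fun i => ((p - ℓ) i : ℝ) ^ 2) (fun _ _ => sq_nonneg _)
          (Finset.mem_univ i)
      have hbc : |(ℓ 1 : ℝ)| ≤ |(ℓ 2 : ℝ)| := sq_le_sq.mp h1
      have hpi : ∀ i, |(ℓ i : ℝ)| ≤ 4 * kF → |(p i : ℝ)| ≤ 5 * kF := by
        intro i hi
        have e : (p i : ℝ) = ((p - ℓ) i : ℝ) + ℓ i := by simp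
        rw [e]
        exact (abs_add_le _ _).trans (by linarith [hq i])
      have hp1 := hpi 1 (by linarith)
      have hp2 := hpi 2 (by linarith)
      have hrlt : |((p 2 % ℓ 2 : ℤ) : ℝ)| ≤ |(ℓ 2 : ℝ)| := by
        have a := Int.emod_nonneg (p 2) hc
        have b := (Int.emod_lt_abs (p 2) hc).le
        have : |p 2 % ℓ 2| ≤ |ℓ 2| := by rw [abs_of_nonneg a]; exact b
        exact_mod_cast this
      have hJc : |(J p : ℝ) * ℓ 2| ≤ 9 * kF := by
        have e : (J p : ℝ) * ℓ 2 = p 2 - ((p 2 % ℓ 2 : ℤ) : ℝ) := by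
          rw [hr]; push_cast; ring
        rw [e]
        exact (abs_sub _ _).trans (by linarith)
      have hJb : |(J p : ℝ) * ℓ 1| ≤ 9 * kF := by
        rw [abs_mul] at hJc ⊢
        exact (mul_le_mul_of_nonneg_left hbc (abs_nonneg _)).trans hJc
      simp only [κ]
      push_cast
      exact (abs_sub _ _).trans (by linarith)
    have h5 : ((F.image κ).card : ℝ) ≤
        ((F.image (fun p => (κ p).1)).card : ℝ) * (((|ℓ 2|).toNat : ℕ) : ℝ) := by
      exact_mod_cast h2
    refine h5.trans ?_
    rw [h3]
    apply mul_le_mul (by linarith) hcL (abs_nonneg _) (by linarith)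
  rw [← Finset.sum_fiberwise_of_maps_to (t := F.image κ) (g := κ)
    (fun p hp => Finset.mem_image_of_mem _ hp)]
  have h6 := Finset.sum_le_card_nsmul (F.image κ) _ _ (fun q _ => hfib q)
  rw [nsmul_eq_mul] at h6
  have h7 := mul_le_mul_of_nonneg_right hcardκ (by positivity : 0 ≤ 24 / L)
  have h8 : 29 * kF * L * (24 / L) = 696 * kF := by field_simp; norm_num
  linarith

lemma sum_of_dominant {kF : ℝ} (hk : 1 ≤ kF) {ℓ : Z3} (hℓ : ℓ ≠ 0)
    (h0 : (ℓ 0 : ℝ) ^ 2 ≤ (ℓ 2 : ℝ) ^ 2) (h1 : (ℓ 1 : ℝ) ^ 2 ≤ (ℓ 2 : ℝ) ^ 2)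
    {F : Finset Z3} (hF : ∀ p ∈ F, p ∈ lens kF ℓ) :
    ∑ p ∈ F, (lam ℓ p)⁻¹ ≤ 2000000 * kF := by
  rcases le_total (16 * kF ^ 2) (nsq ℓ) with h | h
  · linarith [sum_far hk h hF]
  · rw [← Finset.sum_filter_add_sum_filter_not F (fun p => lam ℓ p < nsq ℓ)]
    have a := sum_low hk (one_le_nsq hℓ) h h0 h1
      (F := F.filter (fun p => lam ℓ p < nsq ℓ))
      (fun p hp => hF p (Finset.mem_filter.mp hp).1) (fun p hp => (Finset.mem_filter.mp hp).2)
    have b := sum_high hk (one_le_nsq hℓ) h h0 h1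
      (F := F.filter (fun p => ¬ lam ℓ p < nsq ℓ))
      (fun p hp => hF p (Finset.mem_filter.mp hp).1)
      (fun p hp => not_lt.mp (Finset.mem_filter.mp hp).2)
    linarith

/-- The lens sum `∑ λ⁻¹` is `O(kF)`, uniformly in `ℓ`. -/
lemma sum_lens {kF : ℝ} (hk : 1 ≤ kF) {ℓ : Z3} (hℓ : ℓ ≠ 0) {F : Finset Z3}
    (hF : ∀ p ∈ F, p ∈ lens kF ℓ) : ∑ p ∈ F, (lam ℓ p)⁻¹ ≤ 2000000 * kF := by
  -- a coordinate permutation moves the largest coordinate of `ℓ` to the last place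
  obtain ⟨i, hi⟩ := Finite.exists_max (fun i => (ℓ i : ℝ) ^ 2)
  let σ : Equiv.Perm (Fin 3) := Equiv.swap i 2
  have hσ2 : σ 2 = i := Equiv.swap_apply_right i 2
  have hnsq : ∀ p : Z3, nsq (p ∘ σ) = nsq p := fun p =>
    Equiv.sum_comp σ (fun j => (p j : ℝ) ^ 2)
  have hsub : ∀ p : Z3, p ∘ σ - ℓ ∘ σ = (p - ℓ) ∘ σ := fun p => rfl
  have hlam : ∀ p : Z3, lam (ℓ ∘ σ) (p ∘ σ) = lam ℓ p := by
    intro p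
    simp only [lam, hsub, hnsq]
  have hinj : Function.Injective (fun p : Z3 => p ∘ σ) := σ.surjective.injective_comp_right
  have h := sum_of_dominant hk (ℓ := ℓ ∘ σ) (F := F.image (fun p : Z3 => p ∘ σ))
    (fun h => hℓ (hinj h))
    (by simpa [hσ2] using hi (σ 0)) (by simpa [hσ2] using hi (σ 1)) (by
      intro q hq
      obtain ⟨p, hp, rfl⟩ := Finset.mem_image.mp hq
      have := hF p hp
      simpa only [lens, BF, Set.mem_ofPred_eq, hsub, hnsq] using this)
  rw [Finset.sum_image (fun a _ b _ hab => hinj hab)] at h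
  simpa only [hlam] using h

lemma matPowC_one (K : Z3 → Z3 → ℂ) : matPowC K 1 = K := by
  funext r s
  change ∑' t : Z3, K r t * (if t = s then 1 else 0) = K r s
  rw [tsum_eq_single s]
  · simp
  · intro t ht; simp [ht]

/-- Matrix-element bounds for powers of the Bogoliubov kernel: if
`|K_{r,s}| ≤ g k_F⁻¹ (λ_{ℓ,r}+λ_{ℓ,s})⁻¹` on `L_ℓ`, then
`|(K^m)_{r,s}| ≤ (Cg)^m k_F⁻¹ (λ_{ℓ,r}+λ_{ℓ,s})⁻¹`. -/
theorem stmt2 : ∃ C : ℝ, 0 < C ∧ ∀ kF : ℝ, 1 ≤ kF → ∀ ℓ : Z3, ℓ ≠ 0 →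
    ∀ g : ℝ, 0 ≤ g → ∀ K : Z3 → Z3 → ℂ,
      (∀ r s : Z3, (r ∉ lens kF ℓ ∨ s ∉ lens kF ℓ) → K r s = 0) →
      (∀ r ∈ lens kF ℓ, ∀ s ∈ lens kF ℓ, ‖K r s‖ ≤ g * kF⁻¹ * (lam ℓ r + lam ℓ s)⁻¹) →
      ∀ m : ℕ, 1 ≤ m → ∀ r ∈ lens kF ℓ, ∀ s ∈ lens kF ℓ,
        ‖matPowC K m r s‖ ≤ (C * g) ^ m * kF⁻¹ * (lam ℓ r + lam ℓ s)⁻¹ := by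
  classical
  refine ⟨2000000, by norm_num, ?_⟩
  intro kF hk ℓ hℓ g hg K hK0 hK m hm
  have hk0 : 0 < kF := by linarith
  have hfin := lens_finite kF hk0.le ℓ
  induction m, hm using Nat.le_induction with
  | base =>
    intro r hr s hs
    rw [matPowC_one, pow_one]
    refine (hK r hr s hs).trans ?_
    have h1 := half_le_lam hr
    have h2 := half_le_lam hs
    have : 0 ≤ g * kF⁻¹ * (lam ℓ r + lam ℓ s)⁻¹ := by positivity
    linarith
  | succ m hm ih =>
    intro r hr s hs
    have h1 := half_le_lam hr
    have h2 := half_le_lam hs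
    have hsum : matPowC K (m + 1) r s
        = ∑ t ∈ hfin.toFinset, K r t * matPowC K m t s := by
      change ∑' t : Z3, K r t * matPowC K m t s = _
      apply tsum_eq_sum
      intro t ht
      rw [hK0 r t (Or.inr (by simpa using ht)), zero_mul]
    rw [hsum]
    set D := g * (2000000 * g) ^ m * kF⁻¹ * kF⁻¹ * (lam ℓ r + lam ℓ s)⁻¹ with hD
    have hD0 : 0 ≤ D := by positivity
    have hterm : ∀ t ∈ hfin.toFinset, ‖K r t * matPowC K m t s‖ ≤ D * (lam ℓ t)⁻¹ := by
      intro t ht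
      have ht' : t ∈ lens kF ℓ := by simpa using ht
      have h3 := half_le_lam ht'
      have hprod : (lam ℓ r + lam ℓ t)⁻¹ * (lam ℓ t + lam ℓ s)⁻¹
          ≤ (lam ℓ r + lam ℓ s)⁻¹ * (lam ℓ t)⁻¹ := by
        rw [← mul_inv, ← mul_inv]
        apply inv_anti₀ (by positivity)
        nlinarith [mul_pos (by linarith : 0 < lam ℓ r) (by linarith : 0 < lam ℓ s)]
      rw [norm_mul]
      refine (mul_le_mul (hK r hr t ht') (ih t ht' s hs) (norm_nonneg _) (by positivity)).trans ?_
      have h4 := mul_le_mul_of_nonneg_left hprod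
        (by positivity : 0 ≤ g * (2000000 * g) ^ m * kF⁻¹ * kF⁻¹)
      rw [hD]
      calc _ = g * (2000000 * g) ^ m * kF⁻¹ * kF⁻¹ *
            ((lam ℓ r + lam ℓ t)⁻¹ * (lam ℓ t + lam ℓ s)⁻¹) := by ring
        _ ≤ _ := h4
        _ = _ := by ring
    refine (norm_sum_le_of_le _ hterm).trans ?_
    rw [← Finset.mul_sum]
    have hS := sum_lens hk hℓ (F := hfin.toFinset) (fun p hp => by simpa using hp)
    refine (mul_le_mul_of_nonneg_left hS hD0).trans (le_of_eq ?_)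
    rw [hD]
    field_simp
    ring
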